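/- Let S² be the unit sphere in ℝ³ with geodesic distance d and surface measure μ, fix a finite set 𝒫 of smooth real vector fields on S² spanning the tangent space at each point, set 𝒫₀ = 𝒫 ∪ {identity}, and fix a > 1. Then there exists C₁ > 0 as follows. Suppose for each j ∈ ℤ, {E_{j,k} : 1 ≤ k ≤ N_j} is a finite disjoint measurable partition of S² with each E_{j,k} of diameter less than a^j, x_{j,k} ∈ E_{j,k}, and φ_{j,k}, ψ_{j,k} ∈ ℳ_{x_{j,k}, a^j}. Suppose F is an r-bump function on S² for some r with 0 < r ≤ π/10. Then for every x ∈ S², ∑_{j∈ℤ} ∑_{k=1}^{N_j} μ(E_{j,k}) |⟨F, φ_{j,k}⟩| |ψ_{j,k}(x)| ≤ C₁, with the series converging uniformly in x; moreover C₁ can be chosen independently of the choices of {φ_{j,k}}, {ψ_{j,k}}, {E_{j,k}}, {x_{j,k}}, r and F. -/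

import Mathlib

open Metric Manifold MeasureTheory
open scoped RealInnerProductSpace

noncomputable section

abbrev E3 : Type := EuclideanSpace ℝ (Fin 3)

/-- The unit sphere `S² ⊆ ℝ³`. -/
abbrev Sph : Type := Metric.sphere (0 : E3) 1

instance : Fact (Module.finrank ℝ E3 = 2 + 1) := ⟨by simp⟩

/-- The geodesic distance on the sphere, `d(x,y) = arccos⟨x,y⟩`. -/
def gdist (x y : Sph) : ℝ := Real.arccos ⟪(x : E3), (y : E3)⟫

/-- The surface measure on the sphere. -/
def sphMeasure : Measure Sph := (volume : Measure E3).toSphere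

/-- A vector field `X` applied to a function `ω : S² → ℂ`, i.e. `(Xω)(x)`. -/
def mderivApplyS (ω : Sph → ℂ) (x : Sph) (v : TangentSpace (𝓡 2) x) : ℂ :=
  mfderiv (𝓡 2) 𝓘(ℝ, ℂ) ω x v

/-- The class `ℳ_{x,t}`: smooth mean-zero functions `φ` on `S²` such that
`t^{2+deg Y} |(d(x,y)/t)^N (Yφ)(y)| ≤ 1` for all `y ∈ S²`, `Y ∈ 𝒫₀ = 𝒫 ∪ {id}`
and integers `0 ≤ N ≤ 4`, where `𝒫 = {X i}`. -/
def MClass {ι : Type*} (X : ι → (x : Sph) → TangentSpace (𝓡 2) x)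
    (x : Sph) (t : ℝ) : Set (Sph → ℂ) :=
  {φ | ContMDiff (𝓡 2) 𝓘(ℝ, ℂ) (⊤ : ℕ∞) φ ∧
    (∫ y, φ y ∂sphMeasure) = 0 ∧
    (∀ (y : Sph) (N : ℕ), N ≤ 4 → t ^ 2 * ((gdist x y / t) ^ N * ‖φ y‖) ≤ 1) ∧
    (∀ i : ι, ∀ (y : Sph) (N : ℕ), N ≤ 4 →
      t ^ 3 * ((gdist x y / t) ^ N * ‖mderivApplyS φ y (X i y)‖) ≤ 1)}

/-- The inner product `⟨F,φ⟩ = ∫ F φ̄ dμ` on the sphere. -/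
def sphInner (F φ : Sph → ℂ) : ℂ := ∫ y, F y * (starRingEnd ℂ) (φ y) ∂sphMeasure

/-- An `r`-bump function on `S²` relative to the family of vector fields `X i`:
a `C¹` function supported in some geodesic ball `B(p,r)` with `‖ω‖_∞ ≤ 1` and
`max_i ‖(X i)ω‖_∞ ≤ 1/r`. -/
def IsSphBump {ι : Type*} (X : ι → (x : Sph) → TangentSpace (𝓡 2) x)
    (r : ℝ) (ω : Sph → ℂ) : Prop :=
  ContMDiff (𝓡 2) 𝓘(ℝ, ℂ) 1 ω ∧
  (∃ p : Sph, tsupport ω ⊆ {y | gdist p y < r}) ∧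
  (∀ x, ‖ω x‖ ≤ 1) ∧
  (∀ i : ι, ∀ x, ‖mderivApplyS ω x (X i x)‖ ≤ 1 / r)


lemma gd_chord (x y : Sph) : dist x y ≤ gdist x y := by
  have hx : ‖(x : E3)‖ = 1 := by simp
  have hy : ‖(y : E3)‖ = 1 := by simp
  have h0 : 0 ≤ gdist x y := Real.arccos_nonneg _
  have hc : Real.cos (gdist x y) = ⟪(x : E3), (y : E3)⟫ := by
    have h := abs_le.1 (abs_real_inner_le_norm (x : E3) (y : E3))
    rw [hx, hy] at h
    exact Real.cos_arccos (by linarith [h.1]) (by linarith [h.2])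
  have hn : dist x y ^ 2 = 2 - 2 * Real.cos (gdist x y) := by
    rw [Subtype.dist_eq, dist_eq_norm, norm_sub_sq_real, hx, hy, hc]; ring
  have := Real.one_sub_sq_div_two_le_cos (x := gdist x y)
  exact abs_le_of_sq_le_sq' (by linarith) h0 |>.2

instance : IsFiniteMeasure sphMeasure := by unfold sphMeasure; infer_instance

open scoped Pointwise in
lemma cap_meas : ∃ C : ℝ, 0 < C ∧ ∀ (x : Sph) (s : ℝ), 0 < s →
    sphMeasure (Metric.closedBall x s) ≤ ENNReal.ofReal (C * s ^ 2) := by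
  set V := (volume (Metric.ball (0 : E3) 1)).toReal with hV
  have hVtop : volume (Metric.ball (0 : E3) 1) ≠ ⊤ := measure_ball_lt_top.ne
  have hV0 : 0 ≤ V := ENNReal.toReal_nonneg
  set W := (sphMeasure Set.univ).toReal with hW
  have hW0 : 0 ≤ W := ENNReal.toReal_nonneg
  refine ⟨3 * 81 * V + W + 1, by positivity, fun x s hs => ?_⟩
  rcases le_or_gt 1 s with h1 | h1
  · calc sphMeasure (Metric.closedBall x s) ≤ sphMeasure Set.univ := measure_mono (Set.subset_univ _)
      _ = ENNReal.ofReal W := (ENNReal.ofReal_toReal (measure_ne_top _ _)).symm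
      _ ≤ _ := ENNReal.ofReal_le_ofReal (by
          have h2 : 1 ≤ s ^ 2 := one_le_pow₀ h1
          calc W ≤ (3 * 81 * V + W + 1) * 1 := by linarith
            _ ≤ _ := by gcongr)
  have hmeas : MeasurableSet (Metric.closedBall x s) := Metric.isClosed_closedBall.measurableSet
  unfold sphMeasure
  rw [Measure.toSphere_apply' _ hmeas]
  set n := ⌈1 / s⌉₊ with hn
  have hn1 : 1 / s ≤ n := Nat.le_ceil _
  have hn2 : (n : ℝ) < 1 / s + 1 := Nat.ceil_lt_add_one (by positivity)
  have hn0 : (0 : ℝ) < n := lt_of_lt_of_le (by positivity) hn1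
  have hns : 1 / (n : ℝ) ≤ s := by
    rw [div_le_iff₀ hn0]; rw [div_le_iff₀ hs] at hn1; linarith
  have hsub : (Set.Ioo (0 : ℝ) 1 • ((↑) '' (Metric.closedBall x s) : Set E3)) ⊆
      ⋃ i ∈ Finset.range n, Metric.ball (((i : ℝ) / n) • (x : E3)) (3 * s) := by
    rintro _ ⟨c, hc, _, ⟨y, hy, rfl⟩, rfl⟩
    have hc0 := hc.1
    have hc1 := hc.2
    simp only [Set.mem_iUnion, Finset.mem_range]
    have hf1 : (⌊c * n⌋₊ : ℝ) ≤ c * n := Nat.floor_le (by positivity)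
    have hf2 : c * n < (⌊c * n⌋₊ : ℝ) + 1 := Nat.lt_floor_add_one _
    refine ⟨⌊c * n⌋₊, ?_, ?_⟩
    · have : (⌊c * n⌋₊ : ℝ) < n := by nlinarith
      exact_mod_cast this
    · set q : ℝ := (⌊c * n⌋₊ : ℝ) / n with hq
      have e : c • (y : E3) - q • (x : E3) = c • ((y : E3) - x) + (c - q) • (x : E3) := by
        rw [smul_sub, sub_smul]; abel
      have hyx : ‖(y : E3) - x‖ ≤ s := by
        rw [← dist_eq_norm]; exact hy
      have hcq : |c - q| ≤ s := by
        have h1 : q ≤ c := by rw [hq, div_le_iff₀ hn0]; exact hf1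
        have h2 : c - q ≤ 1 / n := by
          rw [hq, sub_le_iff_le_add, ← add_div, le_div_iff₀ hn0]; linarith
        rw [abs_of_nonneg (by linarith)]; linarith
      simp only [Metric.mem_ball]
      rw [dist_eq_norm, e]
      calc _ ≤ ‖c • ((y : E3) - x)‖ + ‖(c - q) • (x : E3)‖ := norm_add_le _ _
        _ = c * ‖(y : E3) - x‖ + |c - q| := by
            rw [norm_smul, norm_smul, Real.norm_eq_abs, Real.norm_eq_abs, abs_of_pos hc0]; simp
        _ < 3 * s := by nlinarith [norm_nonneg ((y : E3) - x)]
  have hb : ∀ i ∈ Finset.range n, volume (Metric.ball (((i : ℝ) / n) • (x : E3)) (3 * s)) =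
      ENNReal.ofReal (27 * s ^ 3 * V) := by
    intro i _
    rw [Measure.addHaar_ball _ _ (by positivity), ← ENNReal.ofReal_toReal hVtop,
      ← ENNReal.ofReal_mul (by positivity)]
    congr 1
    have hfr : Module.finrank ℝ E3 = 3 := by simp
    rw [hfr, ← hV]
    ring
  have hfr : Module.finrank ℝ E3 = 3 := by simp
  calc ((Module.finrank ℝ E3 : ℕ) : ENNReal) * volume (Set.Ioo (0 : ℝ) 1 • ((↑) '' (Metric.closedBall x s) : Set E3))
      ≤ 3 * ∑ i ∈ Finset.range n, volume (Metric.ball (((i : ℝ) / n) • (x : E3)) (3 * s)) := by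
        rw [hfr]; push_cast
        gcongr
        exact (measure_mono hsub).trans (measure_biUnion_finset_le _ _)
    _ = ENNReal.ofReal (3 * (n * (27 * s ^ 3 * V))) := by
        rw [Finset.sum_congr rfl hb, Finset.sum_const, nsmul_eq_mul, Finset.card_range,
          ENNReal.ofReal_mul (p := (3 : ℝ)) (by norm_num), ENNReal.ofReal_mul (p := (n : ℝ)) (by positivity)]
        simp only [ENNReal.ofReal_ofNat, ENNReal.ofReal_natCast]
    _ ≤ _ := by
        apply ENNReal.ofReal_le_ofReal
        have : (n : ℝ) * s ≤ 2 := by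
          have := mul_lt_mul_of_pos_right hn2 hs
          rw [add_mul, one_div_mul_cancel hs.ne'] at this
          linarith
        have h2 : 3 * (n * (27 * s ^ 3 * V)) = (n * s) * (81 * V * s ^ 2) := by ring
        rw [h2]
        have : (n * s) * (81 * V * s ^ 2) ≤ 2 * (81 * V * s ^ 2) := by gcongr
        have h3 : 0 ≤ V * s ^ 2 := by positivity
        have h4 : 0 ≤ W * s ^ 2 := by positivity
        nlinarith [sq_nonneg s]

/-- kernel -/
def ker (t : ℝ) (x y : Sph) : ℝ := (t ^ 2)⁻¹ * ((1 + dist x y / t) ^ 3)⁻¹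

lemma ker_nonneg {t : ℝ} (ht : 0 < t) (x y : Sph) : 0 ≤ ker t x y := by
  unfold ker; positivity

lemma ker_cont {t : ℝ} (ht : 0 < t) (x : Sph) : Continuous (ker t x) := by
  unfold ker
  refine continuous_const.mul (Continuous.inv₀ (by fun_prop) fun y => ?_)
  positivity

lemma ker_int {t : ℝ} (ht : 0 < t) (x : Sph) : Integrable (ker t x) sphMeasure := by
  obtain ⟨B, hB⟩ := isCompact_univ.exists_bound_of_continuousOn (ker_cont ht x).continuousOn
  exact Integrable.of_bound (ker_cont ht x).aestronglyMeasurable B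
    (Filter.Eventually.of_forall fun y => hB y trivial)

lemma ker_bound : ∃ C : ℝ, 0 < C ∧ ∀ (x : Sph) (t : ℝ), 0 < t →
    ∫ y, ker t x y ∂sphMeasure ≤ C := by
  obtain ⟨C, hC, h⟩ := cap_meas
  refine ⟨16 * C, by positivity, fun x t ht => ?_⟩
  rw [integral_eq_lintegral_of_nonneg_ae (Filter.Eventually.of_forall (ker_nonneg ht x))
    (ker_cont ht x).aestronglyMeasurable]
  refine ENNReal.toReal_le_of_le_ofReal (by positivity) ?_
  have hpt : ∀ y, ENNReal.ofReal (ker t x y) ≤ ∑' n : ℕ,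
      (Metric.closedBall x (2 ^ n * t)).indicator
        (fun _ => ENNReal.ofReal (8 * (t ^ 2)⁻¹ * ((8 : ℝ) ^ n)⁻¹)) y := by
    intro y
    have hex : ∃ n : ℕ, dist x y ≤ 2 ^ n * t := by
      obtain ⟨n, hn⟩ := pow_unbounded_of_one_lt (dist x y / t) (one_lt_two)
      exact ⟨n, by rw [div_lt_iff₀ ht] at hn; exact hn.le⟩
    classical
    set n := Nat.find hex with hn
    have h1 : dist x y ≤ 2 ^ n * t := Nat.find_spec hex
    refine le_trans ?_ (ENNReal.le_tsum n)
    rw [Set.indicator_of_mem (by rw [Metric.mem_closedBall, dist_comm]; exact h1)]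
    apply ENNReal.ofReal_le_ofReal
    unfold ker
    rw [mul_comm 8, mul_assoc]
    gcongr
    have h2 : (2 : ℝ) ^ n ≤ 2 * (1 + dist x y / t) := by
      have hd : 0 ≤ dist x y / t := by positivity
      rcases Nat.eq_zero_or_pos n with h0 | h0
      · rw [h0]; simp; linarith
      · have := Nat.find_min hex (m := n - 1) (by omega)
        push Not at this
        rw [← lt_div_iff₀ ht] at this
        obtain ⟨m, hm⟩ : ∃ m, n = m + 1 := ⟨n - 1, by omega⟩
        rw [hm] at this ⊢
        simp only [Nat.add_sub_cancel] at this
        rw [pow_succ]; linarith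
    have h3 : (8 : ℝ) ^ n ≤ 8 * (1 + dist x y / t) ^ 3 := by
      calc (8 : ℝ) ^ n = (2 ^ n) ^ 3 := by rw [← pow_mul, mul_comm, pow_mul]; norm_num
        _ ≤ (2 * (1 + dist x y / t)) ^ 3 := by gcongr
        _ = _ := by ring
    rw [← div_eq_mul_inv, ← one_div, div_le_div_iff₀ (by positivity) (by positivity)]
    linarith
  calc ∫⁻ y, ENNReal.ofReal (ker t x y) ∂sphMeasure
      ≤ ∫⁻ y, ∑' n : ℕ, (Metric.closedBall x (2 ^ n * t)).indicator
        (fun _ => ENNReal.ofReal (8 * (t ^ 2)⁻¹ * ((8 : ℝ) ^ n)⁻¹)) y ∂sphMeasure := lintegral_mono hpt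
    _ = ∑' n : ℕ, ENNReal.ofReal (8 * (t ^ 2)⁻¹ * ((8 : ℝ) ^ n)⁻¹) *
        sphMeasure (Metric.closedBall x (2 ^ n * t)) := by
        rw [lintegral_tsum fun n => (measurable_const.indicator
          Metric.isClosed_closedBall.measurableSet).aemeasurable]
        congr 1; ext n
        rw [lintegral_indicator_const Metric.isClosed_closedBall.measurableSet]
    _ ≤ ∑' n : ℕ, ENNReal.ofReal (8 * C * (1 / 2) ^ n) := by
        refine ENNReal.tsum_le_tsum fun n => ?_
        refine (mul_le_mul_right (h x (2 ^ n * t) (by positivity)) _).trans ?_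
        rw [← ENNReal.ofReal_mul (by positivity)]
        apply ENNReal.ofReal_le_ofReal
        apply le_of_eq
        have : (8 : ℝ) ^ n = 2 ^ n * 2 ^ n * 2 ^ n := by
          rw [← mul_pow, ← mul_pow]; norm_num
        rw [this, one_div, inv_pow]
        field_simp
    _ = ENNReal.ofReal (16 * C) := by
        rw [← ENNReal.ofReal_tsum_of_nonneg (fun n => by positivity)
          (summable_geometric_two.mul_left _), tsum_mul_left, tsum_geometric_two]
        congr 1; ring

/-- the differential of the inclusion -/
def dInc (x : Sph) : TangentSpace (𝓡 2) x →L[ℝ] E3 :=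
  mfderiv (𝓡 2) 𝓘(ℝ, E3) ((↑) : Sph → E3) x

lemma dInc_inj (x : Sph) : Function.Injective (dInc x) := by
  unfold dInc
  convert! injective_mvfderiv_subtypeVal_sphere (n := 2) x

lemma dInc_range (x : Sph) : (dInc x).range = (Submodule.span ℝ {(x : E3)})ᗮ := by
  unfold dInc
  convert! range_mvfderiv_subtypeVal (n := 2) x

lemma dInc_cont (X : (x : Sph) → TangentSpace (𝓡 2) x)
    (hX : ContMDiff (𝓡 2) (𝓡 2).tangent (⊤ : ℕ∞)
      (fun x => (⟨x, X x⟩ : TangentBundle (𝓡 2) Sph))) :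
    Continuous fun x => dInc x (X x) := by
  have h1 : ContMDiff (𝓡 2) 𝓘(ℝ, E3) 1 ((↑) : Sph → E3) := contMDiff_coe_sphere
  have h2 : Continuous (tangentMap (𝓡 2) 𝓘(ℝ, E3) ((↑) : Sph → E3)) :=
    h1.continuous_tangentMap le_rfl
  have h3 := (contMDiff_snd_tangentBundle_modelSpace (n := 0) E3 𝓘(ℝ, E3)).continuous
  exact h3.comp (h2.comp hX.continuous)

lemma frame_bound {ι : Type*} [Fintype ι] (X : ι → (x : Sph) → TangentSpace (𝓡 2) x)
    (hXsmooth : ∀ i, ContMDiff (𝓡 2) (𝓡 2).tangent (⊤ : ℕ∞)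
      (fun x => (⟨x, X i x⟩ : TangentBundle (𝓡 2) Sph)))
    (hXspan : ∀ x : Sph, Submodule.span ℝ (Set.range fun i => X i x) = ⊤) :
    ∃ K : ℝ, 0 < K ∧ ∀ (x : Sph) (v : TangentSpace (𝓡 2) x)
      (L : TangentSpace (𝓡 2) x →L[ℝ] ℂ) (B : ℝ), 0 ≤ B → (∀ i, ‖L (X i x)‖ ≤ B) →
      ‖L v‖ ≤ K * B * ‖dInc x v‖ := by
  set Y : ι → Sph → E3 := fun i x => dInc x (X i x) with hY
  have hYc : ∀ i, Continuous (Y i) := fun i => dInc_cont (X i) (hXsmooth i)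
  have hYperp : ∀ (x : Sph) v, ⟪(x : E3), dInc x v⟫ = 0 := by
    intro x v
    have : dInc x v ∈ (Submodule.span ℝ {(x : E3)})ᗮ := by
      rw [← dInc_range]; exact ⟨v, rfl⟩
    exact Submodule.mem_orthogonal_singleton_iff_inner_right.1 this
  -- quadratic form
  set q : Sph → E3 → ℝ := fun x u => ⟪(x : E3), u⟫ ^ 2 + ∑ i, ⟪Y i x, u⟫ ^ 2 with hq
  have hqpos : ∀ x u, u ≠ 0 → 0 < q x u := by
    intro x u hu
    have h0 : 0 ≤ q x u := by simp only [hq]; positivity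
    refine lt_of_le_of_ne h0 fun h => hu ?_
    have hs : 0 ≤ ∑ i, ⟪Y i x, u⟫ ^ 2 := Finset.sum_nonneg fun i _ => sq_nonneg _
    have hx2 := sq_nonneg ⟪(x : E3), u⟫
    simp only [hq] at h
    have e1 : ⟪(x : E3), u⟫ = 0 := by
      have : ⟪(x : E3), u⟫ ^ 2 = 0 := by linarith
      exact pow_eq_zero_iff two_ne_zero |>.1 this
    have e2 : ∑ i, ⟪Y i x, u⟫ ^ 2 = 0 := by linarith
    rw [Finset.sum_eq_zero_iff_of_nonneg (fun i _ => sq_nonneg _)] at e2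
    have e3 : ∀ i, ⟪Y i x, u⟫ = 0 := fun i => pow_eq_zero_iff two_ne_zero |>.1 (e2 i (Finset.mem_univ _))
    have hu1 : u ∈ (Submodule.span ℝ {(x : E3)})ᗮ :=
      Submodule.mem_orthogonal_singleton_iff_inner_right.2 e1
    rw [← dInc_range] at hu1
    obtain ⟨v, hv⟩ := hu1
    have key : ∀ w : TangentSpace (𝓡 2) x, ⟪dInc x w, u⟫ = 0 := by
      intro w
      have hw : w ∈ Submodule.span ℝ (Set.range fun i => X i x) := by rw [hXspan]; trivial
      induction hw using Submodule.span_induction with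
      | mem w hw => obtain ⟨i, rfl⟩ := hw; exact e3 i
      | zero => rw [map_zero, inner_zero_left]
      | add a b _ _ ha hb => rw [map_add, inner_add_left, ha, hb, add_zero]
      | smul c a _ ha => rw [map_smul, inner_smul_left, ha, mul_zero]
    have := key v
    change dInc x v = u at hv
    rw [hv] at this
    exact inner_self_eq_zero.1 this
  have hqc : Continuous fun p : Sph × Sph => q p.1 p.2 := by
    have : ∀ i, Continuous fun p : Sph × Sph => Y i p.1 := fun i => (hYc i).comp continuous_fst
    simp only [hq]
    fun_prop
  obtain ⟨c, hc, hcq⟩ : ∃ c : ℝ, 0 < c ∧ ∀ x u : Sph, c ≤ q x u := by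
    have hne : (Set.univ : Set (Sph × Sph)).Nonempty := by
      have : Nonempty Sph := (NormedSpace.sphere_nonempty.2 zero_le_one).to_subtype
      exact Set.univ_nonempty
    obtain ⟨p, _, hp⟩ := isCompact_univ.exists_isMinOn hne hqc.continuousOn
    refine ⟨q p.1 p.2, hqpos _ _ ?_, fun x u => hp (Set.mem_univ (x, u))⟩
    exact ne_zero_of_mem_unit_sphere p.2
  have hcq' : ∀ (x : Sph) (u : E3), c * ‖u‖ ^ 2 ≤ q x u := by
    intro x u
    by_cases hu : u = 0
    · rw [hu]; simp [hq]
    have hn : ‖u‖ ≠ 0 := norm_ne_zero_iff.2 hu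
    have h1 := hcq x ⟨‖u‖⁻¹ • u, by simp [norm_smul, hn]⟩
    have h2 : q x (‖u‖⁻¹ • u) = (‖u‖ ^ 2)⁻¹ * q x u := by
      simp only [hq, real_inner_smul_right, mul_pow, mul_add, Finset.mul_sum, inv_pow]
    simp only [h2] at h1
    rwa [inv_mul_eq_div, le_div_iff₀ (by positivity)] at h1
  obtain ⟨M, hM0, hM⟩ : ∃ M : ℝ, 0 ≤ M ∧ ∀ i x, ‖Y i x‖ ≤ M := by
    have : ∀ i, ∃ M, ∀ x, ‖Y i x‖ ≤ M := fun i => by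
      obtain ⟨M, h⟩ := isCompact_univ.exists_bound_of_continuousOn (hYc i).continuousOn
      exact ⟨M, fun x => h x trivial⟩
    choose M hM using this
    refine ⟨∑ i, |M i|, by positivity, fun i x => (hM i x).trans ((le_abs_self _).trans ?_)⟩
    exact Finset.single_le_sum (f := fun i => |M i|) (fun i _ => abs_nonneg _) (Finset.mem_univ i)
  refine ⟨Fintype.card ι * M * c⁻¹ + 1, by positivity, fun x v L B hB hL => ?_⟩
  -- operator
  let A : E3 →ₗ[ℝ] E3 :=
    { toFun := fun u => ⟪(x : E3), u⟫ • (x : E3) + ∑ i, ⟪Y i x, u⟫ • Y i x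
      map_add' := fun a b => by
        simp only [inner_add_right, add_smul, Finset.sum_add_distrib]; abel
      map_smul' := fun k a => by
        simp only [real_inner_smul_right, mul_smul, Finset.smul_sum, smul_add, RingHom.id_apply] }
  have hA : ∀ u, A u = ⟪(x : E3), u⟫ • (x : E3) + ∑ i, ⟪Y i x, u⟫ • Y i x := fun u => rfl
  have hAq : ∀ u, ⟪A u, u⟫ = q x u := by
    intro u
    rw [hA, inner_add_left, sum_inner]
    simp only [real_inner_smul_left, hq, sq]
  have hinj : Function.Injective A := by
    rw [injective_iff_map_eq_zero]
    intro u hu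
    by_contra h
    have := hqpos x u h
    rw [← hAq, hu, inner_zero_left] at this
    exact lt_irrefl _ this
  obtain ⟨u, hu⟩ := (LinearMap.injective_iff_surjective.1 hinj) (dInc x v)
  have hxu : ⟪(x : E3), u⟫ = 0 := by
    have h1 : ⟪(x : E3), A u⟫ = 0 := by rw [hu]; exact hYperp x v
    rw [hA, inner_add_right, inner_sum, real_inner_smul_right, real_inner_self_eq_norm_sq] at h1
    have : ∀ i, ⟪(x : E3), ⟪Y i x, u⟫ • Y i x⟫ = 0 := fun i => by
      rw [real_inner_smul_right, hYperp x (X i x), mul_zero]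
    simp only [this] at h1
    simpa using h1
  have hun : ‖u‖ ≤ c⁻¹ * ‖dInc x v‖ := by
    by_cases h : ‖u‖ = 0
    · rw [h]; positivity
    have hp : 0 < ‖u‖ := lt_of_le_of_ne (norm_nonneg _) (Ne.symm h)
    have h1 := hcq' x u
    rw [← hAq, hu] at h1
    have h2 := h1.trans (real_inner_le_norm _ _)
    rw [inv_mul_eq_div, le_div_iff₀ hc]
    nlinarith
  have hv : v = ∑ i, ⟪Y i x, u⟫ • X i x := by
    apply dInc_inj x
    rw [← hu, hA, hxu, zero_smul, zero_add, map_sum]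
    simp only [map_smul, hY]
  calc ‖L v‖ = ‖∑ i, ⟪Y i x, u⟫ • L (X i x)‖ := by
        conv_lhs => rw [hv]
        rw [map_sum]
        simp only [map_smul]
    _ ≤ ∑ i : ι, M * (c⁻¹ * ‖dInc x v‖) * B := by
        refine norm_sum_le_of_le _ fun i _ => ?_
        rw [norm_smul]
        refine mul_le_mul ?_ (hL i) (norm_nonneg _) (by positivity)
        exact (norm_inner_le_norm _ _).trans (mul_le_mul (hM i x) hun (norm_nonneg _) hM0)
    _ = (Fintype.card ι * M * c⁻¹) * B * ‖dInc x v‖ := by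
        rw [Finset.sum_const, nsmul_eq_mul, Finset.card_univ]; ring
    _ ≤ _ := by gcongr; linarith

lemma arc_exists (y z : Sph) : ∃ e : E3, ‖e‖ = 1 ∧ ⟪(y : E3), e⟫ = 0 ∧
    (z : E3) = Real.cos (gdist y z) • (y : E3) + Real.sin (gdist y z) • e := by
  have hy : ‖(y : E3)‖ = 1 := by simp
  have hz : ‖(z : E3)‖ = 1 := by simp
  set θ := gdist y z with hθ
  have hc : Real.cos θ = ⟪(y : E3), (z : E3)⟫ := by
    have h := abs_le.1 (abs_real_inner_le_norm (y : E3) (z : E3))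
    rw [hy, hz] at h
    exact Real.cos_arccos (by linarith [h.1]) (by linarith [h.2])
  set w : E3 := (z : E3) - Real.cos θ • (y : E3) with hw
  have hyw : ⟪(y : E3), w⟫ = 0 := by
    rw [hw, inner_sub_right, real_inner_smul_right, real_inner_self_eq_norm_sq, hy, hc]; ring
  have hwn : ‖w‖ ^ 2 = Real.sin θ ^ 2 := by
    rw [hw, norm_sub_sq_real, norm_smul, hy, hz, real_inner_smul_right, real_inner_comm, ← hc,
      Real.sin_sq, Real.norm_eq_abs, mul_one, sq_abs]; ring
  by_cases hs : Real.sin θ = 0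
  · have hw0 : w = 0 := by
      rw [hs] at hwn; simpa using hwn
    have : ∃ e0 ∈ (Submodule.span ℝ {(y : E3)})ᗮ, e0 ≠ 0 := by
      apply Submodule.exists_mem_ne_zero_of_ne_bot
      intro hb
      have h2 := Submodule.finrank_orthogonal_span_singleton (𝕜 := ℝ) (n := 2)
        (ne_zero_of_mem_unit_sphere y)
      rw [hb] at h2
      simp at h2
    obtain ⟨e0, he0, hne⟩ := this
    have hn : ‖e0‖ ≠ 0 := norm_ne_zero_iff.2 hne
    refine ⟨‖e0‖⁻¹ • e0, by simp [norm_smul, hn], ?_, ?_⟩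
    · rw [real_inner_smul_right, Submodule.mem_orthogonal_singleton_iff_inner_right.1 he0, mul_zero]
    · rw [hs, zero_smul, add_zero]; exact sub_eq_zero.1 hw0
  · refine ⟨(Real.sin θ)⁻¹ • w, ?_, ?_, ?_⟩
    · have : ‖(Real.sin θ)⁻¹ • w‖ ^ 2 = 1 := by
        rw [norm_smul, mul_pow, hwn, Real.norm_eq_abs, sq_abs, inv_pow,
          inv_mul_cancel₀ (by positivity)]
      exact (pow_eq_one_iff_of_nonneg (norm_nonneg _) two_ne_zero).1 this
    · rw [real_inner_smul_right, hyw, mul_zero]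
    · rw [smul_smul, mul_inv_cancel₀ hs, one_smul, hw]; abel

lemma bump_lip {ι : Type*} [Fintype ι] (X : ι → (x : Sph) → TangentSpace (𝓡 2) x)
    (hXsmooth : ∀ i, ContMDiff (𝓡 2) (𝓡 2).tangent (⊤ : ℕ∞)
      (fun x => (⟨x, X i x⟩ : TangentBundle (𝓡 2) Sph)))
    (hXspan : ∀ x : Sph, Submodule.span ℝ (Set.range fun i => X i x) = ⊤) :
    ∃ K : ℝ, 0 < K ∧ ∀ (r : ℝ), 0 < r → ∀ F : Sph → ℂ, IsSphBump X r F →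
      ∀ y z, ‖F z - F y‖ ≤ K / r * gdist y z := by
  obtain ⟨K, hK, h⟩ := frame_bound X hXsmooth hXspan
  refine ⟨K, hK, fun r hr F hF y z => ?_⟩
  obtain ⟨e, he, hye, hz⟩ := arc_exists y z
  have hy : ‖(y : E3)‖ = 1 := by simp
  let g : ℝ → E3 := fun θ => Real.cos θ • (y : E3) + Real.sin θ • e
  have hg1 : ∀ θ, g θ ∈ Metric.sphere (0 : E3) 1 := by
    intro θ
    have : ‖g θ‖ ^ 2 = 1 := by
      simp only [g]
      rw [norm_add_sq_real, norm_smul, norm_smul, he, hy, real_inner_smul_left,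
        real_inner_smul_right, hye]
      simp
    rw [mem_sphere_zero_iff_norm]
    exact (pow_eq_one_iff_of_nonneg (norm_nonneg _) two_ne_zero).1 this
  have hgd : ∀ θ, HasDerivAt g (-Real.sin θ • (y : E3) + Real.cos θ • e) θ := fun θ =>
    ((Real.hasDerivAt_cos θ).smul_const _).add ((Real.hasDerivAt_sin θ).smul_const _)
  have hgn : ∀ θ, ‖-Real.sin θ • (y : E3) + Real.cos θ • e‖ = 1 := by
    intro θ
    have : ‖-Real.sin θ • (y : E3) + Real.cos θ • e‖ ^ 2 = 1 := by
      rw [norm_add_sq_real, norm_smul, norm_smul, he, hy, real_inner_smul_left,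
        real_inner_smul_right, hye]
      simp
    exact (pow_eq_one_iff_of_nonneg (norm_nonneg _) two_ne_zero).1 this
  have hgc : ContDiff ℝ 1 g := by
    have h1 := Real.contDiff_cos (n := 1)
    have h2 := Real.contDiff_sin (n := 1)
    simp only [g]
    fun_prop
  let γ : ℝ → Sph := Set.codRestrict g _ hg1
  have hγ : ContMDiff 𝓘(ℝ, ℝ) (𝓡 2) 1 γ := hgc.contMDiff.codRestrict_sphere hg1
  have hFm : ∀ x, MDifferentiableAt (𝓡 2) 𝓘(ℝ, ℂ) F x := fun x =>
    (hF.1 x).mdifferentiableAt one_ne_zero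
  have hγm : ∀ θ, MDifferentiableAt 𝓘(ℝ, ℝ) (𝓡 2) γ θ := fun x =>
    (hγ x).mdifferentiableAt one_ne_zero
  have hcm : ∀ x : Sph, MDifferentiableAt (𝓡 2) 𝓘(ℝ, E3) ((↑) : Sph → E3) x := fun x =>
    ((contMDiff_coe_sphere (m := 1)) x).mdifferentiableAt one_ne_zero
  have hdg : ∀ θ, dInc (γ θ) (mfderiv 𝓘(ℝ, ℝ) (𝓡 2) γ θ (1 : ℝ)) =
      -Real.sin θ • (y : E3) + Real.cos θ • e := by
    intro θ
    have h1 : mfderiv 𝓘(ℝ, ℝ) 𝓘(ℝ, E3) (((↑) : Sph → E3) ∘ γ) θ = _ :=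
      mfderiv_comp θ (hcm (γ θ)) (hγm θ)
    have h2 : ((↑) : Sph → E3) ∘ γ = g := rfl
    rw [h2, mfderiv_eq_fderiv, (hgd θ).hasFDerivAt.fderiv] at h1
    have h3 := DFunLike.congr_fun h1 (1 : ℝ)
    refine Eq.trans ?_ (h3.symm.trans ?_)
    · rfl
    · change (1 : ℝ) • (-Real.sin θ • (y : E3) + Real.cos θ • e) = _
      rw [one_smul]
  have hFd : ∀ θ, HasDerivAt (F ∘ γ)
      (mderivApplyS F (γ θ) (mfderiv 𝓘(ℝ, ℝ) (𝓡 2) γ θ (1 : ℝ))) θ := by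
    intro θ
    have h1 := ((hFm (γ θ)).hasMFDerivAt.comp θ (hγm θ).hasMFDerivAt).hasFDerivAt
    have h2 := HasFDerivAt.hasDerivAt (𝕜 := ℝ) (F := ℂ) h1
    exact h2
  have hb : ∀ θ, ‖mderivApplyS F (γ θ) (mfderiv 𝓘(ℝ, ℝ) (𝓡 2) γ θ (1 : ℝ))‖ ≤ K / r := by
    intro θ
    have := h (γ θ) (mfderiv 𝓘(ℝ, ℝ) (𝓡 2) γ θ (1 : ℝ)) (mfderiv (𝓡 2) 𝓘(ℝ, ℂ) F (γ θ)) (1 / r)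
      (by positivity) (fun i => hF.2.2.2 i (γ θ))
    rw [hdg, hgn, mul_one, mul_one_div] at this
    exact this
  have hθ0 : 0 ≤ gdist y z := Real.arccos_nonneg _
  have hmv := convex_univ.norm_image_sub_le_of_norm_hasDerivWithin_le (𝕜 := ℝ)
    (f := F ∘ γ) (fun θ _ => (hFd θ).hasDerivWithinAt) (fun θ _ => hb θ)
    (Set.mem_univ 0) (Set.mem_univ (gdist y z))
  have e0 : γ 0 = y := Subtype.ext (by simp [γ, g])
  have e1 : γ (gdist y z) = z := Subtype.ext hz.symm
  simpa [e0, e1, abs_of_nonneg hθ0] using hmv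

lemma cont_int {f : Sph → ℂ} (hf : Continuous f) : Integrable f sphMeasure := by
  obtain ⟨B, hB⟩ := isCompact_univ.exists_bound_of_continuousOn hf.continuousOn
  exact Integrable.of_bound hf.aestronglyMeasurable B
    (Filter.Eventually.of_forall fun y => hB y trivial)

lemma gdist_nn (x y : Sph) : 0 ≤ gdist x y := Real.arccos_nonneg _

lemma mclass_ker {ι : Type*} {X : ι → (x : Sph) → TangentSpace (𝓡 2) x} {x : Sph} {t : ℝ}
    (ht : 0 < t) {φ : Sph → ℂ} (hφ : φ ∈ MClass X x t) (y : Sph) :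
    (1 + gdist x y / t) * ‖φ y‖ ≤ 16 * ker t x y := by
  have h0 := hφ.2.2.1 y 0 (by norm_num)
  have h4 := hφ.2.2.1 y 4 le_rfl
  rw [pow_zero, one_mul] at h0
  unfold ker
  set u := gdist x y / t with hu
  set d := dist x y / t with hd
  have hu0 : 0 ≤ u := div_nonneg (gdist_nn x y) ht.le
  have hd0 : 0 ≤ d := div_nonneg dist_nonneg ht.le
  have hdu : d ≤ u := div_le_div_of_nonneg_right (gd_chord x y) ht.le
  have hn := norm_nonneg (φ y)
  have hp : (1 + u) ^ 4 ≤ 8 * (1 + u ^ 4) := by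
    nlinarith [sq_nonneg (u - 1), sq_nonneg (u ^ 2 - 1), sq_nonneg (u ^ 2 - u), mul_nonneg hu0 (sq_nonneg (u - 1))]
  have h1 : t ^ 2 * ((1 + u) ^ 4 * ‖φ y‖) ≤ 16 := by
    calc t ^ 2 * ((1 + u) ^ 4 * ‖φ y‖) ≤ t ^ 2 * (8 * (1 + u ^ 4) * ‖φ y‖) := by gcongr
      _ = 8 * (t ^ 2 * ‖φ y‖ + t ^ 2 * (u ^ 4 * ‖φ y‖)) := by ring
      _ ≤ 16 := by linarith
  rw [← mul_inv, ← div_eq_mul_inv, le_div_iff₀ (by positivity)]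
  calc (1 + u) * ‖φ y‖ * (t ^ 2 * (1 + d) ^ 3) ≤ (1 + u) * ‖φ y‖ * (t ^ 2 * (1 + u) ^ 3) := by
        gcongr
    _ = t ^ 2 * ((1 + u) ^ 4 * ‖φ y‖) := by ring
    _ ≤ 16 := h1

lemma inner_small {ι : Type*} {X : ι → (x : Sph) → TangentSpace (𝓡 2) x} {x : Sph} {t : ℝ}
    (ht : 0 < t) {φ : Sph → ℂ} (hφ : φ ∈ MClass X x t) {C : ℝ}
    (hC : ∫ y, ker t x y ∂sphMeasure ≤ C) {F : Sph → ℂ} (hF : Continuous F) {K : ℝ} (hK : 0 ≤ K)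
    (hL : ∀ z, ‖F z - F x‖ ≤ K * gdist x z) :
    ‖sphInner F φ‖ ≤ 16 * C * K * t := by
  have hφc : Continuous φ := hφ.1.continuous
  have hcc : Continuous fun y => (starRingEnd ℂ) (φ y) := Complex.continuous_conj.comp hφc
  have e : sphInner F φ = ∫ y, (F y - F x) * (starRingEnd ℂ) (φ y) ∂sphMeasure := by
    have h0 : ∫ y, F x * (starRingEnd ℂ) (φ y) ∂sphMeasure = 0 := by
      rw [integral_const_mul, integral_conj, hφ.2.1]; simp
    have i1 : Integrable (fun y => F y * (starRingEnd ℂ) (φ y)) sphMeasure :=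
      cont_int (hF.mul hcc)
    have i2 : Integrable (fun y => F x * (starRingEnd ℂ) (φ y)) sphMeasure :=
      cont_int (continuous_const.mul hcc)
    unfold sphInner
    simp only [sub_mul]
    rw [integral_sub i1 i2, h0, sub_zero]
  rw [e]
  calc _ ≤ ∫ y, 16 * K * t * ker t x y ∂sphMeasure := by
        refine norm_integral_le_of_norm_le ((ker_int ht x).const_mul _)
          (Filter.Eventually.of_forall fun y => ?_)
        have h1 := mclass_ker ht hφ y
        have h2 : gdist x y * ‖φ y‖ ≤ t * (16 * ker t x y) := by
          calc gdist x y * ‖φ y‖ = t * (gdist x y / t * ‖φ y‖) := by field_simp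
            _ ≤ t * ((1 + gdist x y / t) * ‖φ y‖) := by gcongr; linarith
            _ ≤ _ := by gcongr
        rw [norm_mul, RCLike.norm_conj]
        calc ‖F y - F x‖ * ‖φ y‖ ≤ K * gdist x y * ‖φ y‖ := by gcongr; exact hL y
          _ = K * (gdist x y * ‖φ y‖) := by ring
          _ ≤ K * (t * (16 * ker t x y)) := by gcongr
          _ = _ := by ring
    _ = 16 * K * t * ∫ y, ker t x y ∂sphMeasure := integral_const_mul _ _
    _ ≤ 16 * K * t * C := by gcongr
    _ = _ := by ring

lemma inner_large {ι : Type*} {X : ι → (x : Sph) → TangentSpace (𝓡 2) x} {x : Sph} {t : ℝ}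
    (ht : 0 < t) {φ : Sph → ℂ} (hφ : φ ∈ MClass X x t) {C : ℝ} (hC0 : 0 ≤ C)
    (hC : ∀ (x : Sph) (s : ℝ), 0 < s →
      sphMeasure (Metric.closedBall x s) ≤ ENNReal.ofReal (C * s ^ 2))
    {F : Sph → ℂ} {r : ℝ} (hr : 0 < r) (hF : IsSphBump X r F) :
    ‖sphInner F φ‖ ≤ C * (r / t) ^ 2 := by
  obtain ⟨p, hp⟩ := hF.2.1
  have hm : MeasurableSet (Metric.closedBall p r) := Metric.isClosed_closedBall.measurableSet
  unfold sphInner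
  calc _ ≤ ∫ y, (Metric.closedBall p r).indicator (fun _ => (t ^ 2)⁻¹) y ∂sphMeasure := by
        refine norm_integral_le_of_norm_le ((integrable_const _).indicator hm)
          (Filter.Eventually.of_forall fun y => ?_)
        by_cases hy : y ∈ Metric.closedBall p r
        · rw [Set.indicator_of_mem hy, norm_mul, RCLike.norm_conj]
          have h0 := hφ.2.2.1 y 0 (by norm_num)
          rw [pow_zero, one_mul] at h0
          have h1 : ‖φ y‖ ≤ (t ^ 2)⁻¹ := by
            rw [← one_div, le_div_iff₀ (by positivity)]; linarith
          calc _ ≤ 1 * (t ^ 2)⁻¹ := mul_le_mul (hF.2.2.1 y) h1 (norm_nonneg _) zero_le_one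
            _ = _ := one_mul _
        · rw [Set.indicator_of_notMem hy]
          have : F y = 0 := by
            by_contra hne
            have h1 : gdist p y < r := hp (subset_tsupport _ hne)
            exact hy (by rw [Metric.mem_closedBall, dist_comm]; exact (gd_chord p y).trans h1.le)
          rw [this, zero_mul, norm_zero]
    _ = sphMeasure.real (Metric.closedBall p r) * (t ^ 2)⁻¹ := by
        rw [integral_indicator hm, setIntegral_const, smul_eq_mul]
    _ ≤ C * r ^ 2 * (t ^ 2)⁻¹ := by
        gcongr
        exact ENNReal.toReal_le_of_le_ofReal (by positivity) (hC p r hr)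
    _ = _ := by rw [div_pow]; ring

lemma psi_sum {ι : Type*} {X : ι → (x : Sph) → TangentSpace (𝓡 2) x} {t : ℝ} (ht : 0 < t)
    {n : ℕ} {E : Fin n → Set Sph} (hE : ∀ k, MeasurableSet (E k))
    (hd : Pairwise fun k k' => Disjoint (E k) (E k')) (hU : (⋃ k, E k) = Set.univ)
    (hdiam : ∀ k, ∀ y ∈ E k, ∀ z ∈ E k, gdist y z < t)
    {xp : Fin n → Sph} (hxp : ∀ k, xp k ∈ E k) {ψ : Fin n → Sph → ℂ}
    (hψ : ∀ k, ψ k ∈ MClass X (xp k) t) {x : Sph} {C : ℝ}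
    (hC : ∫ y, ker t x y ∂sphMeasure ≤ C) :
    ∑ k, (sphMeasure (E k)).toReal * ‖ψ k x‖ ≤ 128 * C := by
  have hi : Integrable (fun y => 128 * ker t x y) sphMeasure := (ker_int ht x).const_mul _
  calc _ ≤ ∑ k, ∫ y in E k, 128 * ker t x y ∂sphMeasure := by
        refine Finset.sum_le_sum fun k _ => ?_
        have h1 : (sphMeasure (E k)).toReal * ‖ψ k x‖ = ∫ y in E k, ‖ψ k x‖ ∂sphMeasure := by
          rw [setIntegral_const, smul_eq_mul]; rfl
        rw [h1]
        refine setIntegral_mono_on (integrable_const _).integrableOn hi.integrableOn (hE k) ?_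
        intro y hy
        have h2 := mclass_ker ht (hψ k) x
        have h3 : ‖ψ k x‖ ≤ 16 * ker t (xp k) x := by
          refine le_trans ?_ h2
          have : 0 ≤ gdist (xp k) x / t := div_nonneg (gdist_nn _ _) ht.le
          nlinarith [norm_nonneg (ψ k x)]
        refine h3.trans ?_
        have h4 : dist (xp k) y ≤ t := (gd_chord _ _).trans (hdiam k _ (hxp k) _ hy).le
        have h5 : dist x y ≤ dist (xp k) x + t := by
          have := dist_triangle x (xp k) y
          rw [dist_comm x (xp k)] at this; linarith
        unfold ker
        have h6 : dist x y / t ≤ dist (xp k) x / t + 1 := by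
          rw [div_add_one ht.ne']; gcongr
        have h7 : 0 ≤ dist (xp k) x / t := by positivity
        have h7' : 0 ≤ dist x y / t := by positivity
        have h8 : (1 + dist x y / t) ^ 3 ≤ 8 * (1 + dist (xp k) x / t) ^ 3 := by
          calc _ ≤ (2 * (1 + dist (xp k) x / t)) ^ 3 := by gcongr; linarith
            _ = _ := by ring
        have h9 : ((1 + dist (xp k) x / t) ^ 3)⁻¹ ≤ 8 * ((1 + dist x y / t) ^ 3)⁻¹ := by
          rw [← div_eq_mul_inv, ← one_div, div_le_div_iff₀ (by positivity) (by positivity)]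
          linarith
        have h10 : 0 ≤ (t ^ 2)⁻¹ := by positivity
        nlinarith [mul_le_mul_of_nonneg_left h9 h10]
    _ = ∫ y, 128 * ker t x y ∂sphMeasure := by
        rw [← integral_iUnion_fintype hE hd (fun k => hi.integrableOn), hU, setIntegral_univ]
    _ = 128 * ∫ y, ker t x y ∂sphMeasure := integral_const_mul _ _
    _ ≤ _ := by gcongr

lemma sigma_unif {N : ℤ → ℕ} (f : ((j : ℤ) × Fin (N j)) → Sph → ℝ) (hf : ∀ p x, 0 ≤ f p x)
    (M : ℤ → ℝ) (hM : Summable M) (hfM : ∀ j x, ∑ k, f ⟨j, k⟩ x ≤ M j) :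
    (∀ x, Summable (fun p => f p x) ∧ ∑' p, f p x ≤ ∑' j, M j) ∧
    TendstoUniformly (fun (s : Finset ((j : ℤ) × Fin (N j))) x => ∑ p ∈ s, f p x)
      (fun x => ∑' p, f p x) Filter.atTop := by
  have hg0 : ∀ j x, 0 ≤ ∑ k, f ⟨j, k⟩ x := fun j x => Finset.sum_nonneg fun k _ => hf _ _
  have hgs : ∀ x, Summable fun j => ∑ k, f ⟨j, k⟩ x := fun x =>
    Summable.of_nonneg_of_le (fun j => hg0 j x) (fun j => hfM j x) hM
  have hs : ∀ x, Summable fun p => f p x := fun x => by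
    rw [summable_sigma_of_nonneg fun p => hf p x]
    refine ⟨fun j => (hasSum_fintype _).summable, ?_⟩
    simpa only [tsum_fintype] using hgs x
  have ht : ∀ x, ∑' p, f p x = ∑' j, ∑ k, f ⟨j, k⟩ x := fun x => by
    rw [(hs x).tsum_sigma]
    simp only [tsum_fintype]
  refine ⟨fun x => ⟨hs x, ?_⟩, ?_⟩
  · rw [ht]; exact (hgs x).tsum_le_tsum (fun j => hfM j x) hM
  have hu := tendstoUniformly_tsum (f := fun j x => ∑ k, f ⟨j, k⟩ x) hM (fun j x => by
    rw [Real.norm_of_nonneg (hg0 j x)]; exact hfM j x)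
  rw [Metric.tendstoUniformly_iff] at hu ⊢
  intro ε hε
  obtain ⟨J, hJ⟩ := (hu ε hε).exists
  filter_upwards [Filter.eventually_ge_atTop (J.sigma fun j => (Finset.univ : Finset (Fin (N j))))]
    with s hs' x
  have h1 := hJ x
  rw [Real.dist_eq] at h1 ⊢
  have h2 : ∑ p ∈ s, f p x ≤ ∑' p, f p x := (hs x).sum_le_tsum s fun p _ => hf p x
  have h3 : ∑ j ∈ J, ∑ k, f ⟨j, k⟩ x ≤ ∑ p ∈ s, f p x := by
    rw [← Finset.sum_sigma J (fun j => Finset.univ) (fun p => f p x)]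
    exact Finset.sum_le_sum_of_subset_of_nonneg hs' fun p _ _ => hf p x
  rw [abs_of_nonneg (by linarith)]
  have h4 := (abs_lt.1 h1).2
  rw [← ht] at h4
  linarith

lemma geo_int {b : ℝ} (hb0 : 0 < b) (hb : b < 1) : Summable fun j : ℤ => b ^ j.natAbs := by
  refine Summable.of_nat_of_neg ?_ ?_ <;> simpa using summable_geometric_of_lt_one hb0.le hb
/-- **Uniform summation bound for wavelet coefficients of bump functions.**
Fix `𝒫 = {X i}` smooth vector fields on `S²` spanning the tangent space at each point
and `a > 1`.  There is `C₁ > 0` such that: for any partitions `{E_{j,k}}` of `S²` into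
finitely many measurable pieces of geodesic diameter `< a^j`, points
`x_{j,k} ∈ E_{j,k}`, functions `φ_{j,k}, ψ_{j,k} ∈ ℳ_{x_{j,k},a^j}`, and any `r`-bump
function `F` with `0 < r ≤ π/10`, for every `x ∈ S²`:
`∑_{j,k} μ(E_{j,k}) |⟨F,φ_{j,k}⟩| |ψ_{j,k}(x)| ≤ C₁`, the series converging uniformly
in `x`; `C₁` is independent of all the choices made. -/
theorem statement_16
    (ι : Type*) [Fintype ι] (X : ι → (x : Sph) → TangentSpace (𝓡 2) x)
    (hXsmooth : ∀ i, ContMDiff (𝓡 2) (𝓡 2).tangent (⊤ : ℕ∞)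
      (fun x => (⟨x, X i x⟩ : TangentBundle (𝓡 2) Sph)))
    (hXspan : ∀ x : Sph, Submodule.span ℝ (Set.range fun i => X i x) = ⊤)
    (a : ℝ) (ha : 1 < a) :
    ∃ C₁ : ℝ, 0 < C₁ ∧
      ∀ (N : ℤ → ℕ) (E : (j : ℤ) → Fin (N j) → Set Sph),
        (∀ j k, MeasurableSet (E j k)) →
        (∀ j, Pairwise fun k k' => Disjoint (E j k) (E j k')) →
        (∀ j, (⋃ k, E j k) = Set.univ) →
        (∀ j k, ∀ y ∈ E j k, ∀ z ∈ E j k, gdist y z < a ^ j) →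
        ∀ (xp : (j : ℤ) → Fin (N j) → Sph), (∀ j k, xp j k ∈ E j k) →
        ∀ (φ ψ : (j : ℤ) → Fin (N j) → (Sph → ℂ)),
          (∀ j k, φ j k ∈ MClass X (xp j k) (a ^ j)) →
          (∀ j k, ψ j k ∈ MClass X (xp j k) (a ^ j)) →
        ∀ r : ℝ, 0 < r → r ≤ Real.pi / 10 →
        ∀ F : Sph → ℂ, IsSphBump X r F →
          (∀ x : Sph,
            Summable (fun p : (j : ℤ) × Fin (N j) =>
              (sphMeasure (E p.1 p.2)).toReal * (‖sphInner F (φ p.1 p.2)‖ *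
                ‖ψ p.1 p.2 x‖)) ∧
            (∑' p : (j : ℤ) × Fin (N j),
                (sphMeasure (E p.1 p.2)).toReal * (‖sphInner F (φ p.1 p.2)‖ *
                  ‖ψ p.1 p.2 x‖)) ≤ C₁) ∧
          TendstoUniformly
            (fun (s : Finset ((j : ℤ) × Fin (N j))) (x : Sph) =>
              ∑ p ∈ s, (sphMeasure (E p.1 p.2)).toReal * (‖sphInner F (φ p.1 p.2)‖ *
                ‖ψ p.1 p.2 x‖))
            (fun x : Sph => ∑' p : (j : ℤ) × Fin (N j),
              (sphMeasure (E p.1 p.2)).toReal * (‖sphInner F (φ p.1 p.2)‖ *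
                ‖ψ p.1 p.2 x‖))
            Filter.atTop := by
  classical
  obtain ⟨CV, hCV, hcap⟩ := cap_meas
  obtain ⟨CK, hCK, hker⟩ := ker_bound
  obtain ⟨K, hK, hlip⟩ := bump_lip X hXsmooth hXspan
  have ha0 : 0 < a := by linarith
  have hb0 : 0 < a⁻¹ := by positivity
  have hb1 : a⁻¹ < 1 := inv_lt_one_of_one_lt₀ ha
  set S : ℝ := ∑' m : ℤ, (a⁻¹) ^ m.natAbs with hS
  have hS0 : 0 ≤ S := tsum_nonneg fun m => by positivity
  set D : ℝ := (16 * CK * K + CV * a) * (128 * CK) with hD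
  have hD0 : 0 < D := by positivity
  refine ⟨D * S + 1, by positivity, ?_⟩
  intro N E hE hdisj hU hdiam xp hxp φ ψ hφ hψ r hr _ F hF
  obtain ⟨j0, hj0, hj1⟩ := exists_mem_Ico_zpow hr ha
  have hsum : Summable fun j : ℤ => D * (a⁻¹) ^ (j - j0).natAbs :=
    ((Equiv.subRight j0).summable_iff.2 (geo_int hb0 hb1)).mul_left D
  have htsum : ∑' j : ℤ, D * (a⁻¹) ^ (j - j0).natAbs = D * S := by
    rw [tsum_mul_left, hS]
    congr 1
    exact (Equiv.subRight j0).tsum_eq (fun m : ℤ => (a⁻¹) ^ m.natAbs)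
  have hin : ∀ j k, ‖sphInner F (φ j k)‖ ≤ (16 * CK * K + CV * a) * (a⁻¹) ^ (j - j0).natAbs := by
    intro j k
    have ht : 0 < a ^ j := zpow_pos ha0 j
    rcases le_or_gt j j0 with hj | hj
    · have h1 := inner_small ht (hφ j k) (hker (xp j k) _ ht) hF.1.continuous
        (K := K / r) (by positivity) (fun z => hlip r hr F hF (xp j k) z)
      have h2 : a ^ j / r ≤ (a⁻¹) ^ (j - j0).natAbs := by
        have e : (a⁻¹) ^ (j - j0).natAbs = a ^ j / a ^ j0 := by
          rw [← zpow_sub₀ ha0.ne', ← zpow_natCast, inv_zpow', Int.ofNat_natAbs_of_nonpos (by omega)]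
          congr 1; omega
        rw [e]; gcongr
      calc _ ≤ 16 * CK * (K / r) * a ^ j := h1
        _ = 16 * CK * K * (a ^ j / r) := by ring
        _ ≤ 16 * CK * K * (a⁻¹) ^ (j - j0).natAbs := by gcongr
        _ ≤ _ := by
          gcongr
          have : 0 ≤ CV * a := by positivity
          linarith
    · have h1 := inner_large ht (hφ j k) hCV.le hcap hr hF
      have e : (a⁻¹) ^ (j - j0).natAbs = a ^ j0 / a ^ j := by
        rw [← zpow_sub₀ ha0.ne', ← zpow_natCast, inv_zpow', Int.natAbs_of_nonneg (by omega)]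
        congr 1; omega
      have h2 : r / a ^ j ≤ a * (a⁻¹) ^ (j - j0).natAbs := by
        rw [e, ← mul_div_assoc]
        gcongr
        rw [zpow_add_one₀ ha0.ne'] at hj1
        linarith
      have h3 : r / a ^ j ≤ 1 := by
        rw [div_le_one ht]
        exact hj1.le.trans (zpow_le_zpow_right₀ ha.le (by omega))
      have h4 : 0 ≤ r / a ^ j := by positivity
      calc _ ≤ CV * (r / a ^ j) ^ 2 := h1
        _ ≤ CV * (r / a ^ j) := by gcongr; nlinarith
        _ ≤ CV * (a * (a⁻¹) ^ (j - j0).natAbs) := by gcongr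
        _ = CV * a * (a⁻¹) ^ (j - j0).natAbs := by ring
        _ ≤ _ := by
          gcongr
          have : 0 ≤ 16 * CK * K := by positivity
          linarith
  have main := sigma_unif (N := N) (fun p x => (sphMeasure (E p.1 p.2)).toReal *
      (‖sphInner F (φ p.1 p.2)‖ * ‖ψ p.1 p.2 x‖)) (fun p x => by positivity)
    (fun j => D * (a⁻¹) ^ (j - j0).natAbs) hsum (fun j x => by
      have ht : 0 < a ^ j := zpow_pos ha0 j
      have hp := psi_sum ht (hE j) (hdisj j) (hU j) (hdiam j) (hxp j) (hψ j) (hker x _ ht)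
      calc _ ≤ ∑ k, (16 * CK * K + CV * a) * (a⁻¹) ^ (j - j0).natAbs *
            ((sphMeasure (E j k)).toReal * ‖ψ j k x‖) := by
            refine Finset.sum_le_sum fun k _ => ?_
            rw [mul_left_comm]
            gcongr
            exact hin j k
        _ = (16 * CK * K + CV * a) * (a⁻¹) ^ (j - j0).natAbs *
            ∑ k, (sphMeasure (E j k)).toReal * ‖ψ j k x‖ := by rw [Finset.mul_sum]
        _ ≤ (16 * CK * K + CV * a) * (a⁻¹) ^ (j - j0).natAbs * (128 * CK) := by gcongr
        _ = _ := by rw [hD]; ring)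
  refine ⟨fun x => ⟨(main.1 x).1, ((main.1 x).2.trans htsum.le).trans (by linarith)⟩, main.2⟩
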